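/- arXiv:1911.08186 — 2 statements merged into one kernel-verified Lean document; each statement's English description precedes it below -/
import Mathlib

section
/- Let ℍ be the hyperbolic plane, let C ≥ 1 be a real number, let X' be a nonempty subset of ℍ, let f : X' → ℍ be a C-Lipschitz map, and let ξ ∈ ℍ. Then there exists a point η ∈ ℍ such that d(η, f(x)) ≤ C·d(ξ, x) for all x ∈ X'; in other words, f extends to a C-Lipschitz map on X' ∪ {ξ} sending ξ to η. -/
open scoped UpperHalfPlane

/-!
Let `η` minimise `z ↦ max_i d(z, f(x_i)) / d(ξ, x_i)` over finitely many points `x_i`, with minimum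
`l`, and suppose `l > C`. If the initial directions at `η` of the geodesics to the points `f(x_i)`
attaining the maximum lay in an open half-plane, moving `η` into it would lower the maximum; hence
`0` is a convex combination `∑ w_i u_i` of these unit vectors. Compare with the directions `v_i` at
`ξ` towards `x_i`: the sides at `η` are exactly `l` times those at `ξ`, while the opposite sides are
scaled by at most `C < l`, so by the law of cosines and `l ≥ 1` the angles at `η` are smaller, that
is `⟪u_i, u_j⟫ > ⟪v_i, v_j⟫` whenever `x_i ≠ x_j`. Then `0 = ‖∑ w_i u_i‖² > ‖∑ w_i v_i‖²`, which is
absurd. Compactness of closed balls passes from finite sets to arbitrary ones.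
-/

open Real Set Filter Topology
open scoped RealInnerProductSpace

section HyperbolicFunctions

lemma convexOn_sinh : ConvexOn ℝ (Ici 0) sinh := by
  refine MonotoneOn.convexOn_of_deriv (convex_Ici 0) continuous_sinh.continuousOn
    differentiable_sinh.differentiableOn ?_
  rw [Real.deriv_sinh]
  exact cosh_strictMonoOn.monotoneOn.mono interior_subset

lemma sinh_mul_le_mul_sinh {θ t : ℝ} (hθ₀ : 0 ≤ θ) (hθ₁ : θ ≤ 1) (ht : 0 ≤ t) :
    sinh (θ * t) ≤ θ * sinh t := by
  simpa using convexOn_sinh.2 self_mem_Ici (mem_Ici.2 ht) (sub_nonneg.2 hθ₁) hθ₀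
    (sub_add_cancel 1 θ)

-- By the addition formulas this is `(l + 1) * sinh ((l - 1) * t) ≤ (l - 1) * sinh ((l + 1) * t)`.
lemma sinh_mul_mul_cosh_le {l t : ℝ} (hl : 1 ≤ l) (ht : 0 ≤ t) :
    sinh (l * t) * cosh t ≤ l * cosh (l * t) * sinh t := by
  have h : sinh ((l - 1) / (l + 1) * ((l + 1) * t)) ≤
      (l - 1) / (l + 1) * sinh ((l + 1) * t) :=
    sinh_mul_le_mul_sinh (div_nonneg (by linarith) (by linarith))
      ((div_le_one (by linarith)).2 (by linarith)) (by positivity)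
  rw [← mul_assoc, div_mul_cancel₀ _ (by linarith : l + 1 ≠ 0), div_mul_eq_mul_div,
    le_div_iff₀ (by linarith), sub_one_mul, add_one_mul l t, sinh_sub, sinh_add] at h
  linarith

lemma monotoneOn_sinh_mul_div_sinh {l : ℝ} (hl : 1 ≤ l) :
    MonotoneOn (fun t ↦ sinh (l * t) / sinh t) (Ioi 0) := by
  have hderiv (t : ℝ) (ht : 0 < t) : HasDerivAt (fun t ↦ sinh (l * t) / sinh t)
      ((l * cosh (l * t) * sinh t - sinh (l * t) * cosh t) / sinh t ^ 2) t :=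
    ((((hasDerivAt_id t).const_mul l).sinh.div (hasDerivAt_sinh t)
      (sinh_pos_iff.2 ht).ne').congr_deriv (by simp only [id, mul_one]; ring))
  refine monotoneOn_of_hasDerivWithinAt_nonneg (convex_Ioi 0)
    (fun t ht ↦ (hderiv t ht).continuousAt.continuousWithinAt)
    (fun t ht ↦ (hderiv t (interior_subset ht)).hasDerivWithinAt) fun t ht ↦ ?_
  exact div_nonneg (sub_nonneg.2 (sinh_mul_mul_cosh_le hl (interior_subset ht).le))
    (sq_nonneg _)

-- For natural `l` this function is the Chebyshev polynomial `T_l`.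
lemma convexOn_cosh_mul_arcosh {l : ℝ} (hl : 1 ≤ l) :
    ConvexOn ℝ (Ici 1) fun s ↦ cosh (l * arcosh s) := by
  have hderiv (s : ℝ) (hs : s ∈ Ioi 1) : HasDerivAt (fun s ↦ cosh (l * arcosh s))
      (l * (sinh (l * arcosh s) / sinh (arcosh s))) s := by
    refine ((hasDerivAt_arcosh hs).const_mul l).cosh.congr_deriv ?_
    rw [sinh_arcosh (le_of_lt hs)]
    ring
  refine MonotoneOn.convexOn_of_deriv (convex_Ici 1)
    (continuous_cosh.comp_continuousOn (continuousOn_arcosh.const_mul l)) ?_ ?_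
  all_goals rw [interior_Ici]
  · exact fun s hs ↦ (hderiv s hs).differentiableAt.differentiableWithinAt
  · intro s hs t ht hst
    rw [(hderiv s hs).deriv, (hderiv t ht).deriv]
    refine mul_le_mul_of_nonneg_left ?_ (by linarith)
    exact monotoneOn_sinh_mul_div_sinh hl (arcosh_pos hs) (arcosh_pos ht)
      ((arcosh_le_arcosh (one_pos.trans hs) (one_pos.trans ht)).2 hst)

lemma cosh_mul_arcosh_cosh (l t : ℝ) : cosh (l * arcosh (cosh t)) = cosh (l * t) := by
  rw [← cosh_abs t, arcosh_cosh (abs_nonneg t), ← cosh_abs (l * |t|), abs_mul, abs_abs, ← abs_mul,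
    cosh_abs]

lemma cosh_mul_le_of_cosh_eq {l a b c k : ℝ} (hl : 1 ≤ l) (hk : |k| ≤ 1)
    (h : cosh c = cosh a * cosh b - sinh a * sinh b * k) :
    cosh (l * c) ≤ cosh (l * a) * cosh (l * b) - sinh (l * a) * sinh (l * b) * k := by
  obtain ⟨hk₁, hk₂⟩ := abs_le.1 hk
  have hc : (1 + k) / 2 * cosh (a - b) + (1 - k) / 2 * cosh (a + b) = cosh c := by
    rw [h, cosh_sub, cosh_add]
    ring
  have hconv := (convexOn_cosh_mul_arcosh hl).2 (one_le_cosh (a - b)) (one_le_cosh (a + b))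
    (by linarith : 0 ≤ (1 + k) / 2) (by linarith : 0 ≤ (1 - k) / 2) (by ring)
  simp only [smul_eq_mul, hc, cosh_mul_arcosh_cosh] at hconv
  rw [mul_sub, mul_add, cosh_sub, cosh_add] at hconv
  linarith

end HyperbolicFunctions

section InnerProductSpace

variable {E F ι : Type*} [NormedAddCommGroup E] [InnerProductSpace ℝ E]
  [NormedAddCommGroup F] [InnerProductSpace ℝ F]

lemma exists_forall_inner_pos_of_zero_notMem_convexHull [CompleteSpace E] {s : Set E}
    (hs : s.Finite) (h₀ : (0 : E) ∉ convexHull ℝ s) : ∃ e : E, ∀ u ∈ s, 0 < ⟪e, u⟫ := by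
  obtain ⟨g, c, hc, hg⟩ := geometric_hahn_banach_point_closed (convex_convexHull ℝ s)
    (hs.isCompact_convexHull (𝕜 := ℝ)).isClosed h₀
  rw [map_zero] at hc
  refine ⟨(InnerProductSpace.toDual ℝ E).symm g, fun u hu ↦ ?_⟩
  rw [InnerProductSpace.toDual_symm_apply]
  exact hc.trans (hg u (subset_convexHull ℝ s hu))

lemma norm_sum_smul_sq [Fintype ι] (w : ι → ℝ) (u : ι → E) :
    ‖∑ i, w i • u i‖ ^ 2 = ∑ i, ∑ j, w i * w j * ⟪u i, u j⟫ := by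
  rw [← real_inner_self_eq_norm_sq, sum_inner]
  simp only [inner_sum, real_inner_smul_left, real_inner_smul_right]
  exact Finset.sum_congr rfl fun i _ ↦ Finset.sum_congr rfl fun j _ ↦ by ring

lemma exists_ne_of_sum_smul_eq_zero [Fintype ι] {w : ι → ℝ} {u : ι → E} (hw₀ : ∀ i, 0 ≤ w i)
    (hw₁ : ∑ i, w i = 1) (hu : ∀ i, u i ≠ 0) (hsum : ∑ i, w i • u i = 0) :
    ∃ i j, 0 < w i ∧ 0 < w j ∧ u i ≠ u j := by
  by_contra! h
  obtain ⟨i, -, hi⟩ : ∃ i ∈ Finset.univ, 0 < w i :=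
    Finset.exists_lt_of_sum_lt (by simp [hw₁])
  refine hu i ?_
  calc u i = ∑ j, w j • u i := by rw [← Finset.sum_smul, hw₁, one_smul]
    _ = ∑ j, w j • u j := Finset.sum_congr rfl fun j _ ↦ by
      rcases (hw₀ j).eq_or_lt with hj | hj
      · simp only [← hj, zero_smul]
      · rw [h i j hi hj]
    _ = 0 := hsum

lemma zero_notMem_convexHull_range_of_inner_lt {u : ι → E} {v : ι → F} (hu : ∀ i, ‖u i‖ = 1)
    (hv : ∀ i, ‖v i‖ ≤ 1) (huv : ∀ i j, u i ≠ u j → ⟪v i, v j⟫ < ⟪u i, u j⟫) :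
    (0 : E) ∉ convexHull ℝ (range u) := by
  intro h₀
  obtain ⟨κ, _, w, p, hw₀, hw₁, hp, hsum⟩ := mem_convexHull_iff_exists_fintype.1 h₀
  choose i hi using hp
  obtain rfl : u ∘ i = p := funext hi
  have hle (j k : κ) : ⟪v (i j), v (i k)⟫ ≤ ⟪u (i j), u (i k)⟫ := by
    by_cases hjk : u (i j) = u (i k)
    · rw [hjk, real_inner_self_eq_norm_sq, hu, one_pow]
      exact (real_inner_le_norm _ _).trans (mul_le_one₀ (hv _) (norm_nonneg _) (hv _))
    · exact (huv _ _ hjk).le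
  have hle_mul (j k : κ) : w j * w k * ⟪v (i j), v (i k)⟫ ≤ w j * w k * ⟪u (i j), u (i k)⟫ :=
    mul_le_mul_of_nonneg_left (hle j k) (mul_nonneg (hw₀ j) (hw₀ k))
  obtain ⟨j, k, hj, hk, hjk⟩ := exists_ne_of_sum_smul_eq_zero hw₀ hw₁
    (fun j ↦ norm_ne_zero_iff.1 ((hu (i j)).trans_ne one_ne_zero)) hsum
  have hlt : ‖∑ j, w j • v (i j)‖ ^ 2 < ‖∑ j, w j • u (i j)‖ ^ 2 := by
    simp only [norm_sum_smul_sq]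
    refine Finset.sum_lt_sum (fun j _ ↦ Finset.sum_le_sum fun k _ ↦ hle_mul j k)
      ⟨j, Finset.mem_univ j, Finset.sum_lt_sum (fun k _ ↦ hle_mul j k) ⟨k, Finset.mem_univ k, ?_⟩⟩
    exact mul_lt_mul_of_pos_left (huv _ _ hjk) (mul_pos hj hk)
  have hzero : ∑ j, w j • u (i j) = 0 := hsum
  rw [hzero, norm_zero, zero_pow two_ne_zero] at hlt
  exact (sq_nonneg _).not_gt hlt

end InnerProductSpace

section ProperSpace

variable {M ι : Type*} [PseudoMetricSpace M] [ProperSpace M] [Nonempty ι]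

lemma exists_forall_dist_le_mul_and_forall_exists_le [Finite ι] (p : ι → M) {r : ι → ℝ}
    (hr : ∀ i, 0 < r i) :
    ∃ (η : M) (l : ℝ), (∀ i, dist η (p i) ≤ l * r i) ∧ ∀ z, ∃ i, l * r i ≤ dist z (p i) := by
  have := Fintype.ofFinite ι
  obtain ⟨i₀⟩ := ‹Nonempty ι›
  have : Nonempty M := ⟨p i₀⟩
  let ratio (z : M) (i : ι) : ℝ := dist z (p i) / r i
  let maxRatio (z : M) : ℝ := Finset.univ.sup' ⟨i₀, Finset.mem_univ i₀⟩ (ratio z)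
  have ratio_le (z : M) (i : ι) : ratio z i ≤ maxRatio z :=
    Finset.le_sup' (ratio z) (Finset.mem_univ i)
  have hcont : Continuous maxRatio :=
    Continuous.finset_sup'_apply _ fun i _ ↦ (continuous_id.dist continuous_const).div_const _
  have htendsto : Tendsto maxRatio (cocompact M) atTop :=
    tendsto_atTop_mono (ratio_le · i₀)
      ((tendsto_dist_right_cocompact_atTop (p i₀)).atTop_div_const (hr i₀))
  obtain ⟨η, hη⟩ := hcont.exists_forall_le htendsto
  refine ⟨η, maxRatio η, fun i ↦ (div_le_iff₀ (hr i)).1 (ratio_le η i), fun z ↦ ?_⟩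
  obtain ⟨i, -, hi⟩ := (Finset.le_sup'_iff _).1 (hη z)
  exact ⟨i, (le_div_iff₀ (hr i)).1 hi⟩

lemma exists_forall_dist_le_of_forall_finset (p : ι → M) (R : ι → ℝ)
    (h : ∀ s : Finset ι, s.Nonempty → ∃ η, ∀ i ∈ s, dist η (p i) ≤ R i) :
    ∃ η, ∀ i, dist η (p i) ≤ R i := by
  classical
  obtain ⟨i₀⟩ := ‹Nonempty ι›
  obtain ⟨η, -, hη⟩ := (isCompact_closedBall (p i₀) (R i₀)).inter_iInter_nonempty
    (fun i ↦ Metric.closedBall (p i) (R i)) (fun _ ↦ Metric.isClosed_closedBall) fun s ↦ by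
      obtain ⟨η, hη⟩ := h (insert i₀ s) (Finset.insert_nonempty i₀ s)
      exact ⟨η, hη i₀ (Finset.mem_insert_self i₀ s),
        mem_iInter₂.2 fun i hi ↦ hη i (Finset.mem_insert_of_mem hi)⟩
  exact ⟨η, fun i ↦ mem_iInter.1 hη i⟩

end ProperSpace

lemma eventually_lt_of_hasDerivAt_neg {φ : ℝ → ℝ} {φ' x : ℝ} (h : HasDerivAt φ φ' x)
    (hneg : φ' < 0) : ∀ᶠ t in 𝓝[>] x, φ t < φ x := by
  filter_upwards [h.hasDerivWithinAt.limsup_slope_le' (lt_irrefl x) hneg, self_mem_nhdsWithin]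
    with t hslope ht
  rw [slope_def_field, div_lt_iff₀ (sub_pos.2 ht), zero_mul] at hslope
  exact sub_neg.1 hslope

section HyperbolicPlane

/-- The spatial part of `w` in the hyperboloid model, in an orthonormal frame adapted to the base
point `z`: it is `sinh (dist z w)` times the unit vector at `z` pointing along the geodesic to `w`.
The tangent plane at `z` is identified with `ℂ`, the upward vertical being `Complex.I`. -/
noncomputable def hyperboloidVec (z w : ℍ) : ℂ :=
  ⟨(w.re - z.re) / w.im, ((z.re - w.re) ^ 2 + w.im ^ 2 - z.im ^ 2) / (2 * z.im * w.im)⟩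

/-- The unit vector at `z` pointing along the geodesic from `z` to `w`; it is `0` if `w = z`. -/
noncomputable def geodesicDirection (z w : ℍ) : ℂ :=
  (sinh (dist z w))⁻¹ • hyperboloidVec z w

lemma cosh_dist_eq_sub_inner_hyperboloidVec (z w v : ℍ) :
    cosh (dist w v) =
      cosh (dist z w) * cosh (dist z v) - ⟪hyperboloidVec z w, hyperboloidVec z v⟫ := by
  have := z.im_ne_zero
  have := w.im_ne_zero
  have := v.im_ne_zero
  simp only [UpperHalfPlane.cosh_dist', hyperboloidVec, Complex.inner, Complex.mul_re,
    Complex.conj_re, Complex.conj_im]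
  field_simp
  ring

lemma norm_hyperboloidVec_sq (z w : ℍ) : ‖hyperboloidVec z w‖ ^ 2 = sinh (dist z w) ^ 2 := by
  have h := cosh_dist_eq_sub_inner_hyperboloidVec z w w
  rw [dist_self, cosh_zero, real_inner_self_eq_norm_sq] at h
  rw [sinh_sq]
  linarith

lemma norm_hyperboloidVec (z w : ℍ) : ‖hyperboloidVec z w‖ = sinh (dist z w) :=
  (sq_eq_sq₀ (norm_nonneg _) (sinh_nonneg_iff.2 dist_nonneg)).1 (norm_hyperboloidVec_sq z w)

lemma cosh_dist_eq_sqrt (z w : ℍ) : cosh (dist z w) = √(1 + ‖hyperboloidVec z w‖ ^ 2) := by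
  rw [norm_hyperboloidVec_sq, ← cosh_sq', sqrt_sq (cosh_pos _).le]

lemma hyperboloidVec_surjective (z : ℍ) : Function.Surjective (hyperboloidVec z) := by
  intro g
  -- `T` is to be `cosh (dist z w)`; the formulas for it and for `g.im` then force
  -- `z.im / w.im = T - g.im`.
  set T := √(1 + (g.re ^ 2 + g.im ^ 2))
  have hT_sq : T ^ 2 = 1 + (g.re ^ 2 + g.im ^ 2) := sq_sqrt (by positivity)
  have hpos : 0 < T - g.im := sub_pos.2 (lt_sqrt_of_sq_lt (by nlinarith [sq_nonneg g.re]))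
  have hz := z.im_pos
  obtain ⟨q, hq, hzq⟩ : ∃ q, 0 < q ∧ z.im = q * (T - g.im) :=
    ⟨z.im / (T - g.im), div_pos hz hpos, (div_mul_cancel₀ _ hpos.ne').symm⟩
  refine ⟨⟨⟨z.re + q * g.re, q⟩, hq⟩, Complex.ext ?_ ?_⟩
  · change (z.re + q * g.re - z.re) / q = g.re
    field_simp
    ring
  · change ((z.re - (z.re + q * g.re)) ^ 2 + q ^ 2 - z.im ^ 2) / (2 * z.im * q) = g.im
    rw [div_eq_iff (by positivity), hzq]
    linear_combination (-q ^ 2) * hT_sq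

lemma exists_forall_cosh_dist_eq (z : ℍ) (g : ℂ) : ∃ w, ∀ v,
    cosh (dist w v) = √(1 + ‖g‖ ^ 2) * cosh (dist z v) - ⟪g, hyperboloidVec z v⟫ := by
  obtain ⟨w, rfl⟩ := hyperboloidVec_surjective z g
  exact ⟨w, fun v ↦ by rw [cosh_dist_eq_sub_inner_hyperboloidVec z, cosh_dist_eq_sqrt z w]⟩

lemma sinh_dist_smul_geodesicDirection (z w : ℍ) :
    sinh (dist z w) • geodesicDirection z w = hyperboloidVec z w := by
  rcases eq_or_ne (sinh (dist z w)) 0 with h | h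
  · rw [h, zero_smul, eq_comm, ← norm_eq_zero, norm_hyperboloidVec, h]
  · exact smul_inv_smul₀ h _

theorem hyperbolic_law_of_cosines (z w v : ℍ) :
    cosh (dist w v) = cosh (dist z w) * cosh (dist z v) -
      sinh (dist z w) * sinh (dist z v) * ⟪geodesicDirection z w, geodesicDirection z v⟫ := by
  rw [cosh_dist_eq_sub_inner_hyperboloidVec z, ← sinh_dist_smul_geodesicDirection z w,
    ← sinh_dist_smul_geodesicDirection z v, real_inner_smul_left, real_inner_smul_right, mul_assoc]

lemma norm_geodesicDirection {z w : ℍ} (h : z ≠ w) : ‖geodesicDirection z w‖ = 1 := by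
  have hpos : 0 < sinh (dist z w) := sinh_pos_iff.2 (dist_pos.2 h)
  rw [geodesicDirection, norm_smul, norm_hyperboloidVec, norm_of_nonneg (inv_pos.2 hpos).le,
    inv_mul_cancel₀ hpos.ne']

lemma norm_geodesicDirection_le_one (z w : ℍ) : ‖geodesicDirection z w‖ ≤ 1 := by
  rcases eq_or_ne z w with rfl | h
  · simp [geodesicDirection]
  · exact (norm_geodesicDirection h).le

lemma inner_geodesicDirection_lt {l : ℝ} (hl : 1 ≤ l) {z x y z' x' y' : ℍ}
    (hx : dist z' x' = l * dist z x) (hy : dist z' y' = l * dist z y)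
    (hxy : dist x' y' < l * dist x y) :
    ⟪geodesicDirection z x, geodesicDirection z y⟫ <
      ⟪geodesicDirection z' x', geodesicDirection z' y'⟫ := by
  by_contra! hle
  have habs : |⟪geodesicDirection z x, geodesicDirection z y⟫| ≤ 1 :=
    (abs_real_inner_le_norm _ _).trans (mul_le_one₀ (norm_geodesicDirection_le_one z x)
      (norm_nonneg _) (norm_geodesicDirection_le_one z y))
  have hcosh : cosh (dist x' y') < cosh (l * dist x y) := by
    rwa [cosh_lt_cosh, abs_of_nonneg dist_nonneg, abs_of_nonneg (dist_nonneg.trans hxy.le)]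
  refine hcosh.not_ge ((cosh_mul_le_of_cosh_eq hl habs (hyperbolic_law_of_cosines z x y)).trans ?_)
  rw [hyperbolic_law_of_cosines z' x' y', hx, hy]
  have hsinh_nonneg (v : ℍ) : 0 ≤ sinh (l * dist z v) :=
    sinh_nonneg_iff.2 (mul_nonneg (zero_le_one.trans hl) dist_nonneg)
  exact sub_le_sub_left
    (mul_le_mul_of_nonneg_left hle (mul_nonneg (hsinh_nonneg x) (hsinh_nonneg y))) _

variable {ι : Type*} [Finite ι]

lemma exists_forall_dist_lt_of_inner_pos {z : ℍ} {p : ι → ℍ} {R : ι → ℝ}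
    (hle : ∀ i, dist z (p i) ≤ R i) {e : ℂ}
    (he : ∀ i, dist z (p i) = R i → 0 < ⟪e, hyperboloidVec z (p i)⟫) :
    ∃ w, ∀ i, dist w (p i) < R i := by
  choose γ hγ using fun t : ℝ ↦ exists_forall_cosh_dist_eq z (t • e)
  have hzero (i : ι) : cosh (dist (γ 0) (p i)) = cosh (dist z (p i)) := by simp [hγ]
  have hderiv (i : ι) : HasDerivAt (fun t ↦ cosh (dist (γ t) (p i)))
      (-⟪e, hyperboloidVec z (p i)⟫) 0 := by
    simp only [hγ, norm_smul, mul_pow, Real.norm_eq_abs, sq_abs, real_inner_smul_left]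
    have hsqrt : HasDerivAt (fun t : ℝ ↦ √(1 + t ^ 2 * ‖e‖ ^ 2)) 0 0 := by
      simpa using ((((hasDerivAt_id (0 : ℝ)).pow 2).mul_const (‖e‖ ^ 2)).const_add 1).sqrt (by simp)
    exact ((hsqrt.mul_const (cosh (dist z (p i)))).sub
      ((hasDerivAt_id' 0).mul_const ⟪e, hyperboloidVec z (p i)⟫)).congr_deriv (by ring)
  have hlt (i : ι) : ∀ᶠ t in 𝓝[>] 0, cosh (dist (γ t) (p i)) < cosh (R i) := by
    rcases (hle i).eq_or_lt with hi | hi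
    · simpa only [hzero, hi] using
        eventually_lt_of_hasDerivAt_neg (hderiv i) (neg_lt_zero.2 (he i hi))
    · refine ((hderiv i).continuousAt.mono_left nhdsWithin_le_nhds).eventually_lt_const ?_
      change cosh (dist (γ 0) (p i)) < cosh (R i)
      rwa [hzero, cosh_lt_cosh, abs_of_nonneg dist_nonneg, abs_of_nonneg (dist_nonneg.trans hi.le)]
  obtain ⟨t, ht⟩ := (eventually_all.2 hlt).exists
  refine ⟨γ t, fun i ↦ ?_⟩
  simpa only [cosh_lt_cosh, abs_of_nonneg dist_nonneg,
    abs_of_nonneg (dist_nonneg.trans (hle i))] using ht i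

lemma zero_mem_convexHull_range_geodesicDirection {z : ℍ} {p : ι → ℍ} {R : ι → ℝ}
    (hR : ∀ i, 0 < R i) (hle : ∀ i, dist z (p i) ≤ R i) (hmin : ∀ w, ∃ i, R i ≤ dist w (p i)) :
    (0 : ℂ) ∈ convexHull ℝ
      (range fun i : {i // dist z (p i) = R i} ↦ geodesicDirection z (p i)) := by
  by_contra h₀
  obtain ⟨e, he⟩ := exists_forall_inner_pos_of_zero_notMem_convexHull (finite_range _) h₀
  obtain ⟨w, hw⟩ := exists_forall_dist_lt_of_inner_pos (e := e) hle fun i hi ↦ by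
    rw [← sinh_dist_smul_geodesicDirection, real_inner_smul_right]
    exact mul_pos (sinh_pos_iff.2 (hi ▸ hR i)) (he _ ⟨⟨i, hi⟩, rfl⟩)
  obtain ⟨i, hi⟩ := hmin w
  exact hi.not_gt (hw i)

theorem exists_forall_dist_le_mul_of_finite [Nonempty ι] {C : ℝ} (hC : 1 ≤ C) {x p : ι → ℍ}
    (hp : ∀ i j, dist (p i) (p j) ≤ C * dist (x i) (x j)) (ξ : ℍ) :
    ∃ η, ∀ i, dist η (p i) ≤ C * dist ξ (x i) := by
  by_cases hξ : ∃ i, ξ = x i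
  · obtain ⟨i, rfl⟩ := hξ
    exact ⟨p i, hp i⟩
  push Not at hξ
  have hr (i : ι) : 0 < dist ξ (x i) := dist_pos.2 (hξ i)
  obtain ⟨η, l, hle, hmin⟩ := exists_forall_dist_le_mul_and_forall_exists_le p hr
  suffices hlC : l ≤ C from
    ⟨η, fun i ↦ (hle i).trans (mul_le_mul_of_nonneg_right hlC dist_nonneg)⟩
  by_contra! hCl
  have hR (i : ι) : 0 < l * dist ξ (x i) := mul_pos (by linarith) (hr i)
  refine zero_notMem_convexHull_range_of_inner_lt
    (v := fun i : {i // dist η (p i) = l * dist ξ (x i)} ↦ geodesicDirection ξ (x i))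
    (fun i ↦ norm_geodesicDirection (dist_pos.1 (i.2 ▸ hR i)))
    (fun i ↦ norm_geodesicDirection_le_one ξ (x i)) (fun i j hij ↦ ?_)
    (zero_mem_convexHull_range_geodesicDirection hR hle hmin)
  have hx : x i ≠ x j := fun hx ↦ hij <| by
    rw [dist_le_zero.1 ((hp i j).trans_eq (by rw [hx, dist_self, mul_zero]))]
  exact inner_geodesicDirection_lt (hC.trans hCl.le) i.2 j.2
    ((hp i j).trans_lt (mul_lt_mul_of_pos_right hCl (dist_pos.2 hx)))

end HyperbolicPlane

theorem stmt_12 (C : ℝ) (hC : 1 ≤ C) (X' : Set ℍ) (hne : X'.Nonempty) (f : X' → ℍ)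
    (hf : ∀ x y : X', dist (f x) (f y) ≤ C * dist (x : ℍ) (y : ℍ)) (ξ : ℍ) :
    ∃ η : ℍ, ∀ x : X', dist η (f x) ≤ C * dist ξ (x : ℍ) := by
  have : Nonempty X' := hne.to_subtype
  refine exists_forall_dist_le_of_forall_finset f (fun x ↦ C * dist ξ (x : ℍ)) fun s hs ↦ ?_
  have : Nonempty s := hs.to_subtype
  obtain ⟨η, hη⟩ := exists_forall_dist_le_mul_of_finite hC (fun x y : s ↦ hf x y) ξ
  exact ⟨η, fun x hx ↦ hη ⟨x, hx⟩⟩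
end

section
/- For every real C with 0 ≤ C < 1 and every positive integer m there exists a real C' with C ≤ C' < 1 such that: for every subset X' of the Euclidean space ℝ^m and every C-Lipschitz map f : X' → ℍ into the hyperbolic plane, there exists a C'-Lipschitz map F : ℝ^m → ℍ with F(x) = f(x) for all x ∈ X'. The constant C' depends only on C and m. -/
open scoped UpperHalfPlane

/-!
In fact `C' = C` works, by the Kirszbraun theorem for maps from an inner product space into a proper
space `Y` of nonpositive curvature (Lang–Schroeder). By Zorn's lemma it is enough to extend by one
point, and by compactness of balls the map may be assumed to be defined on finitely many points,
`u i ↦ y i`, with the new point at `0`. The image `c` of the new point is found by minimising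
`∑ i, ((dist c (y i) ^ 2 - ‖u i‖ ^ 2)⁺) ^ 2`. If `a i` are the positive parts at the minimiser, the
first variation towards each `y j`, averaged with the weights `a j`, yields
`(∑ i, a i) * ∑ i, a i ^ 2 ≤ -‖∑ i, a i • u i‖ ^ 2`, so that every `a i` vanishes.
-/

open Filter Topology
open scoped NNReal

section ComparisonPoint

variable {Y : Type*} [PseudoMetricSpace Y] {p q c d : Y} {s t : ℝ}

/-- The point `c` lies at parameter `t` between `p` and `q` in the sense of nonpositive curvature:
its distance to any `z` is at most the one Stewart's theorem gives in a Euclidean comparison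
triangle with vertices `p`, `q`, `z`. -/
def IsComparisonPoint (t : ℝ) (p q c : Y) : Prop :=
  ∀ z, dist c z ^ 2 ≤ (1 - t) * dist p z ^ 2 + t * dist q z ^ 2 - t * (1 - t) * dist p q ^ 2

lemma isComparisonPoint_one (p q : Y) : IsComparisonPoint 1 p q q := fun z => by simp

namespace IsComparisonPoint

lemma dist_left (h : IsComparisonPoint t p q c) (ht₀ : 0 ≤ t) (ht₁ : t ≤ 1) :
    dist p c = t * dist p q := by
  have hp : dist c p ≤ t * dist p q := by
    refine (sq_le_sq₀ dist_nonneg (by positivity)).1 ?_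
    have := h p
    rw [dist_self, dist_comm q p] at this
    linarith
  have hq : dist c q ≤ (1 - t) * dist p q := by
    refine (sq_le_sq₀ dist_nonneg (mul_nonneg (sub_nonneg.2 ht₁) dist_nonneg)).1 ?_
    have := h q
    rw [dist_self] at this
    linarith
  rw [dist_comm c p] at hp
  linarith [dist_triangle p c q]

lemma trans (hd : IsComparisonPoint s p c d) (hc : IsComparisonPoint t p q c) (hs : 0 ≤ s)
    (ht₀ : 0 ≤ t) (ht₁ : t ≤ 1) : IsComparisonPoint (s * t) p q d := fun z => by
  have hdz := hd z
  rw [hc.dist_left ht₀ ht₁] at hdz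
  linarith [mul_le_mul_of_nonneg_left (hc z) hs]

end IsComparisonPoint

/-- A space satisfying the semiparallelogram law of Bruhat and Tits: any two points have a midpoint
in the sense of nonpositive curvature. A complete metric space has this property if and only if it
is CAT(0). -/
class SemiparallelogramSpace (Y : Type*) [PseudoMetricSpace Y] : Prop where
  exists_isComparisonPoint_half (p q : Y) : ∃ c, IsComparisonPoint (1 / 2) p q c

lemma exists_isComparisonPoint_half_pow [SemiparallelogramSpace Y] (p q : Y) (k : ℕ) :
    ∃ c, IsComparisonPoint ((1 / 2) ^ k) p q c := by
  induction k with
  | zero => exact ⟨q, by simpa only [pow_zero] using isComparisonPoint_one p q⟩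
  | succ k ih =>
    obtain ⟨c, hc⟩ := ih
    obtain ⟨d, hd⟩ := SemiparallelogramSpace.exists_isComparisonPoint_half p c
    refine ⟨d, ?_⟩
    rw [pow_succ']
    exact hd.trans hc (by norm_num) (by positivity) (pow_le_one₀ (by norm_num) (by norm_num))

end ComparisonPoint

section Penalty

variable {ι Y : Type*} [PseudoMetricSpace Y]

/-- The amount by which `c` violates the constraint `dist c y ≤ r` (where `0 ≤ r`), measured with
squared distances, as these are what `IsComparisonPoint` controls. -/
noncomputable def excess (y : Y) (r : ℝ) (c : Y) : ℝ := (dist c y ^ 2 - r ^ 2)⁺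

lemma excess_nonneg (y : Y) (r : ℝ) (c : Y) : 0 ≤ excess y r c := posPart_nonneg _

lemma continuous_excess (y : Y) (r : ℝ) : Continuous (excess y r) := by
  unfold excess
  fun_prop

lemma excess_sq (y : Y) (r : ℝ) (c : Y) :
    excess y r c ^ 2 = excess y r c * (dist c y ^ 2 - r ^ 2) := by
  unfold excess
  rcases le_total (dist c y ^ 2 - r ^ 2) 0 with h | h
  · simp [posPart_of_nonpos h]
  · rw [posPart_of_nonneg h, sq]

lemma excess_eq_zero_iff {y : Y} {r : ℝ} {c : Y} (hr : 0 ≤ r) :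
    excess y r c = 0 ↔ dist c y ≤ r := by
  rw [excess, posPart_eq_zero, sub_nonpos, sq_le_sq₀ dist_nonneg hr]

lemma tendsto_excess_cocompact [ProperSpace Y] (y : Y) (r : ℝ) :
    Tendsto (excess y r) (cocompact Y) atTop := by
  have hdist : Tendsto (fun c => dist c y ^ 2 - r ^ 2) (cocompact Y) atTop :=
    tendsto_atTop_add_const_right _ _
      ((tendsto_pow_atTop two_ne_zero).comp (tendsto_dist_right_cocompact_atTop y))
  exact tendsto_atTop_mono (fun c => le_posPart _) hdist

lemma posPart_add_sq_le (e x : ℝ) : (e + x)⁺ ^ 2 ≤ e⁺ ^ 2 + 2 * e⁺ * x + x ^ 2 := by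
  rcases le_total (e + x) 0 with h | h <;> rcases le_total e 0 with h' | h' <;>
    simp only [posPart_of_nonneg, posPart_of_nonpos, h, h'] <;> nlinarith [sq_nonneg (e + x)]

variable [Fintype ι]

/-- The total squared violation of the constraints `dist c (y i) ≤ r i`. -/
noncomputable def penalty (y : ι → Y) (r : ι → ℝ) (c : Y) : ℝ := ∑ i, excess (y i) (r i) c ^ 2

lemma exists_forall_penalty_le [ProperSpace Y] [Nonempty Y] (y : ι → Y) (r : ι → ℝ) :
    ∃ c, ∀ z, penalty y r c ≤ penalty y r z := by
  rcases isEmpty_or_nonempty ι with hι | ⟨⟨i⟩⟩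
  · simp [penalty]
  · have hcont : Continuous (penalty y r) :=
      continuous_finsetSum _ fun i _ => (continuous_excess (y i) (r i)).pow 2
    refine hcont.exists_forall_le ?_
    refine tendsto_atTop_mono (fun c => ?_)
      ((tendsto_pow_atTop two_ne_zero).comp (tendsto_excess_cocompact (y i) (r i)))
    exact Finset.single_le_sum (f := fun i => excess (y i) (r i) c ^ 2)
      (fun i _ => sq_nonneg _) (Finset.mem_univ i)

variable {y : ι → Y} {r : ι → ℝ} {c : Y}

lemma sum_nonneg_of_isComparisonPoint_of_penalty_le {z w : Y} {t : ℝ}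
    (hw : IsComparisonPoint t c z w) (ht : 0 < t) (hle : penalty y r c ≤ penalty y r w) :
    0 ≤ ∑ i, (2 * excess (y i) (r i) c *
          (dist z (y i) ^ 2 - dist c (y i) ^ 2 - (1 - t) * dist c z ^ 2) +
        t * (dist z (y i) ^ 2 - dist c (y i) ^ 2 - (1 - t) * dist c z ^ 2) ^ 2) := by
  set η : ι → ℝ := fun i => dist z (y i) ^ 2 - dist c (y i) ^ 2 - (1 - t) * dist c z ^ 2
  have hexcess (i : ι) : excess (y i) (r i) w ^ 2 ≤
      excess (y i) (r i) c ^ 2 + t * (2 * excess (y i) (r i) c * η i + t * η i ^ 2) := by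
    calc excess (y i) (r i) w ^ 2
        ≤ (dist c (y i) ^ 2 - r i ^ 2 + t * η i)⁺ ^ 2 := by
          refine pow_le_pow_left₀ (posPart_nonneg _) (posPart_mono ?_) 2
          linarith [hw (y i)]
      _ ≤ _ := posPart_add_sq_le _ _
      _ = _ := by unfold excess; ring
  have hsum : penalty y r w ≤
      penalty y r c + t * ∑ i, (2 * excess (y i) (r i) c * η i + t * η i ^ 2) := by
    simpa only [penalty, Finset.mul_sum, ← Finset.sum_add_distrib] using
      Finset.sum_le_sum fun i _ => hexcess i
  exact nonneg_of_mul_nonneg_right (by linarith) ht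

lemma sum_excess_mul_nonneg_of_forall_penalty_le [SemiparallelogramSpace Y]
    (hc : ∀ z, penalty y r c ≤ penalty y r z) (z : Y) :
    0 ≤ ∑ i, excess (y i) (r i) c * (dist z (y i) ^ 2 - dist c (y i) ^ 2 - dist c z ^ 2) := by
  set η : ι → ℝ → ℝ := fun i t =>
    dist z (y i) ^ 2 - dist c (y i) ^ 2 - (1 - t) * dist c z ^ 2 with hη
  set φ : ℝ → ℝ := fun t => ∑ i, (2 * excess (y i) (r i) c * η i t + t * η i t ^ 2) with hφ
  have hnonneg (k : ℕ) : 0 ≤ φ ((1 / 2) ^ k) := by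
    obtain ⟨w, hw⟩ := exists_isComparisonPoint_half_pow c z k
    exact sum_nonneg_of_isComparisonPoint_of_penalty_le hw (by positivity) (hc w)
  have hcont : Continuous φ := by fun_prop
  have hlim : Tendsto (fun k : ℕ => φ ((1 / 2) ^ k)) atTop (𝓝 (φ 0)) :=
    (hcont.tendsto 0).comp
      (tendsto_pow_atTop_nhds_zero_of_lt_one (by norm_num) (by norm_num))
  have hφ₀ : φ 0 = 2 * ∑ i, excess (y i) (r i) c *
      (dist z (y i) ^ 2 - dist c (y i) ^ 2 - dist c z ^ 2) := by
    simp only [hφ, hη, Finset.mul_sum, sub_zero, one_mul, zero_mul, add_zero, mul_assoc]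
  linarith [ge_of_tendsto' hlim hnonneg]

end Penalty

section Intersection

variable {ι E Y : Type*} [SeminormedAddCommGroup E] [InnerProductSpace ℝ E] [PseudoMetricSpace Y]
  {u : ι → E} {y : ι → Y}

lemma sum_mul_sum_mul_norm_sub_sq [Fintype ι] (a : ι → ℝ) (u : ι → E) :
    ∑ j, a j * ∑ i, a i * (‖u j - u i‖ ^ 2 - ‖u i‖ ^ 2 - ‖u j‖ ^ 2) =
      -2 * ‖∑ i, a i • u i‖ ^ 2 := by
  rw [← real_inner_self_eq_norm_sq, sum_inner, Finset.mul_sum]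
  refine Finset.sum_congr rfl fun j _ => ?_
  rw [inner_sum, Finset.mul_sum, Finset.mul_sum]
  refine Finset.sum_congr rfl fun i _ => ?_
  rw [norm_sub_sq_real, real_inner_smul_left, real_inner_smul_right]
  ring

lemma sum_excess_mul_sum_excess_sq_nonpos [Fintype ι] [SemiparallelogramSpace Y]
    (h : ∀ i j, dist (y i) (y j) ≤ ‖u i - u j‖) {c : Y}
    (hc : ∀ z, penalty y (‖u ·‖) c ≤ penalty y (‖u ·‖) z) :
    (∑ i, excess (y i) ‖u i‖ c) * ∑ i, excess (y i) ‖u i‖ c ^ 2 ≤ 0 := by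
  set a : ι → ℝ := fun i => excess (y i) ‖u i‖ c
  have ha (i : ι) : 0 ≤ a i := excess_nonneg _ _ _
  have ha_sq (i : ι) : a i ^ 2 = a i * (dist c (y i) ^ 2 - ‖u i‖ ^ 2) := excess_sq _ _ _
  have hterm (j i : ι) :
      a j * (a i * (dist (y j) (y i) ^ 2 - dist c (y i) ^ 2 - dist c (y j) ^ 2)) ≤
        a j * (a i * (‖u j - u i‖ ^ 2 - ‖u i‖ ^ 2 - ‖u j‖ ^ 2)) -
          (a j * a i ^ 2 + a j ^ 2 * a i) := by
    have hdist : dist (y j) (y i) ^ 2 ≤ ‖u j - u i‖ ^ 2 :=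
      pow_le_pow_left₀ dist_nonneg (h j i) 2
    rw [ha_sq i, ha_sq j]
    linarith [mul_le_mul_of_nonneg_left hdist (mul_nonneg (ha j) (ha i))]
  have hweights : ∑ j, ∑ i, (a j * a i ^ 2 + a j ^ 2 * a i) = 2 * ((∑ i, a i) * ∑ i, a i ^ 2) := by
    simp only [Finset.sum_add_distrib, ← Finset.sum_mul_sum]
    ring
  have hvariation : 0 ≤ -2 * ‖∑ i, a i • u i‖ ^ 2 - 2 * ((∑ i, a i) * ∑ i, a i ^ 2) :=
    calc (0 : ℝ)
        ≤ ∑ j, a j * ∑ i, a i *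
            (dist (y j) (y i) ^ 2 - dist c (y i) ^ 2 - dist c (y j) ^ 2) :=
          Finset.sum_nonneg fun j _ => mul_nonneg (ha j)
            (sum_excess_mul_nonneg_of_forall_penalty_le hc (y j))
      _ ≤ ∑ j, ∑ i, (a j * (a i * (‖u j - u i‖ ^ 2 - ‖u i‖ ^ 2 - ‖u j‖ ^ 2)) -
            (a j * a i ^ 2 + a j ^ 2 * a i)) := by
          simp only [Finset.mul_sum]
          exact Finset.sum_le_sum fun j _ => Finset.sum_le_sum fun i _ => hterm j i
      _ = -2 * ‖∑ i, a i • u i‖ ^ 2 - 2 * ((∑ i, a i) * ∑ i, a i ^ 2) := by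
          rw [← hweights, ← sum_mul_sum_mul_norm_sub_sq]
          simp only [Finset.mul_sum, Finset.sum_sub_distrib]
  linarith [sq_nonneg ‖∑ i, a i • u i‖]

variable [SemiparallelogramSpace Y] [ProperSpace Y] [Nonempty Y]

lemma exists_forall_dist_le_norm_of_finite [Finite ι]
    (h : ∀ i j, dist (y i) (y j) ≤ ‖u i - u j‖) : ∃ c, ∀ i, dist c (y i) ≤ ‖u i‖ := by
  have := Fintype.ofFinite ι
  obtain ⟨c, hc⟩ := exists_forall_penalty_le y (‖u ·‖)
  refine ⟨c, fun i => (excess_eq_zero_iff (norm_nonneg _)).1 ?_⟩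
  have hnonneg (i : ι) : 0 ≤ excess (y i) ‖u i‖ c := excess_nonneg _ _ _
  have hcube : excess (y i) ‖u i‖ c ^ 3 ≤ 0 :=
    calc excess (y i) ‖u i‖ c ^ 3
        = excess (y i) ‖u i‖ c * excess (y i) ‖u i‖ c ^ 2 := pow_succ' _ 2
      _ ≤ (∑ i, excess (y i) ‖u i‖ c) * ∑ i, excess (y i) ‖u i‖ c ^ 2 := by
          gcongr
          · exact Finset.sum_nonneg fun i _ => hnonneg i
          · exact Finset.single_le_sum (fun i _ => hnonneg i) (Finset.mem_univ i)
          · exact Finset.single_le_sum (f := fun i => excess (y i) ‖u i‖ c ^ 2)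
              (fun i _ => sq_nonneg _) (Finset.mem_univ i)
      _ ≤ 0 := sum_excess_mul_sum_excess_sq_nonpos h hc
  exact eq_zero_of_pow_eq_zero (hcube.antisymm (pow_nonneg (hnonneg i) 3))

lemma exists_forall_dist_le_norm (h : ∀ i j, dist (y i) (y j) ≤ ‖u i - u j‖) :
    ∃ c, ∀ i, dist c (y i) ≤ ‖u i‖ := by
  classical
  rcases isEmpty_or_nonempty ι with hι | ⟨⟨i₀⟩⟩
  · simp
  have hfinite (t : Finset ι) : (Metric.closedBall (y i₀) ‖u i₀‖ ∩
      ⋂ i ∈ t, Metric.closedBall (y i) ‖u i‖).Nonempty := by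
    obtain ⟨c, hc⟩ := exists_forall_dist_le_norm_of_finite
      (fun i j : (insert i₀ t : Finset ι) => h i j)
    simp only [Subtype.forall, Finset.forall_mem_insert] at hc
    exact ⟨c, hc.1, by simpa only [Set.mem_iInter, Metric.mem_closedBall] using hc.2⟩
  obtain ⟨c, -, hc⟩ := (isCompact_closedBall (y i₀) ‖u i₀‖).inter_iInter_nonempty
    (fun i => Metric.closedBall (y i) ‖u i‖) (fun _ => Metric.isClosed_closedBall) hfinite
  exact ⟨c, by simpa only [Set.mem_iInter, Metric.mem_closedBall] using hc⟩

end Intersection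

section Extension

/-- The relation `G` is the graph of a `K`-Lipschitz partial map from `X` to `Y`, up to points at
distance zero. -/
def IsLipschitzGraph {X Y : Type*} [PseudoMetricSpace X] [PseudoMetricSpace Y] (K : ℝ≥0)
    (G : Set (X × Y)) : Prop :=
  ∀ p ∈ G, ∀ q ∈ G, dist p.2 q.2 ≤ K * dist p.1 q.1

namespace IsLipschitzGraph

section Pseudo

variable {X Y : Type*} [PseudoMetricSpace X] [PseudoMetricSpace Y] {K : ℝ≥0} {G : Set (X × Y)}

lemma sUnion {𝒢 : Set (Set (X × Y))} (h𝒢 : ∀ G ∈ 𝒢, IsLipschitzGraph K G)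
    (hchain : IsChain (· ⊆ ·) 𝒢) : IsLipschitzGraph K (⋃₀ 𝒢) := by
  rintro p ⟨G, hG, hp⟩ q ⟨H, hH, hq⟩
  rcases hchain.total hG hH with hGH | hHG
  · exact h𝒢 H hH p (hGH hp) q hq
  · exact h𝒢 G hG p hp q (hHG hq)

lemma insert (hG : IsLipschitzGraph K G) {x : X} {c : Y}
    (hc : ∀ p ∈ G, dist c p.2 ≤ K * dist x p.1) : IsLipschitzGraph K (insert (x, c) G) := by
  rintro p (rfl | hp) q (rfl | hq)
  · simp
  · exact hc q hq
  · rw [dist_comm, dist_comm p.1]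
    exact hc p hp
  · exact hG p hp q hq

lemma exists_maximal (hG : IsLipschitzGraph K G) : ∃ M, G ⊆ M ∧ Maximal (IsLipschitzGraph K) M :=
  zorn_subset_nonempty {G | IsLipschitzGraph K G}
    (fun 𝒢 h𝒢 hchain _ =>
      ⟨⋃₀ 𝒢, sUnion (fun _ hG => h𝒢 hG) hchain, fun _ => Set.subset_sUnion_of_mem⟩) G hG

end Pseudo

lemma exists_forall_dist_le {E Y : Type*} [SeminormedAddCommGroup E] [InnerProductSpace ℝ E]
    [PseudoMetricSpace Y] [SemiparallelogramSpace Y] [ProperSpace Y] [Nonempty Y] {K : ℝ≥0}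
    {G : Set (E × Y)} (hG : IsLipschitzGraph K G) (x : E) :
    ∃ c, ∀ p ∈ G, dist c p.2 ≤ K * dist x p.1 := by
  have hnorm (v w : E) : ‖(K : ℝ) • (v - w)‖ = K * dist v w := by
    rw [norm_smul, Real.norm_of_nonneg K.coe_nonneg, dist_eq_norm]
  obtain ⟨c, hc⟩ := exists_forall_dist_le_norm (ι := G) (u := fun p => (K : ℝ) • (x - p.1.1))
    (y := fun p => p.1.2) (fun p q => by
      rw [← smul_sub, sub_sub_sub_cancel_left, hnorm, dist_comm q.1.1]
      exact hG p p.2 q q.2)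
  exact ⟨c, fun p hp => (hc ⟨p, hp⟩).trans_eq (hnorm x p.1)⟩

end IsLipschitzGraph

theorem stmt_16_general {E Y : Type*} [SeminormedAddCommGroup E] [InnerProductSpace ℝ E]
    [MetricSpace Y] [SemiparallelogramSpace Y] [ProperSpace Y] [Nonempty Y] {K : ℝ≥0} {X' : Set E}
    {f : X' → Y} (hf : LipschitzWith K f) :
    ∃ F : E → Y, LipschitzWith K F ∧ ∀ x : X', F x = f x := by
  have hgraph : IsLipschitzGraph K (Set.range fun x : X' => ((x : E), f x)) := by
    rintro _ ⟨x, rfl⟩ _ ⟨y, rfl⟩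
    exact hf.dist_le_mul x y
  obtain ⟨M, hfM, hM⟩ := hgraph.exists_maximal
  have htotal (x : E) : ∃ c, (x, c) ∈ M := by
    obtain ⟨c, hc⟩ := hM.prop.exists_forall_dist_le x
    exact ⟨c, hM.le_of_ge (hM.prop.insert hc) (Set.subset_insert _ _) (Set.mem_insert _ _)⟩
  choose F hF using htotal
  refine ⟨F, .of_dist_le_mul fun x y => hM.prop _ (hF x) _ (hF y), fun x => ?_⟩
  have hdist : dist (F x) (f x) ≤ K * dist (x : E) x := hM.prop _ (hF x) _ (hfM ⟨x, rfl⟩)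
  rwa [dist_self, mul_zero, dist_le_zero] at hdist

end Extension

section HyperbolicPlane

lemma pow_add_pow_le_pow_add_pow {R : Type*} [CommRing R] [LinearOrder R] [IsStrictOrderedRing R]
    {a b p q : R} (ha : 0 ≤ a) (hb : 0 ≤ b) (hq : 0 ≤ q) (hap : a ≤ p) (hbp : b ≤ p)
    (h : a + b ≤ p + q) (n : ℕ) : a ^ n + b ^ n ≤ p ^ n + q ^ n := by
  rcases le_total b q with hbq | hqb
  · exact add_le_add (pow_le_pow_left₀ ha hap n) (pow_le_pow_left₀ hb hbq n)
  rcases le_total a q with haq | hqa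
  · rw [add_comm (a ^ n)]
    exact add_le_add (pow_le_pow_left₀ hb hbp n) (pow_le_pow_left₀ ha haq n)
  have hp : 0 ≤ p := ha.trans hap
  have hdiff : b ^ n - q ^ n ≤ p ^ n - a ^ n := by
    rw [← geom_sum₂_mul, ← geom_sum₂_mul]
    have hsub : b - q ≤ p - a := by linarith
    have := sub_nonneg.2 hqb
    gcongr
  linarith

lemma cosh_add_cosh_lt_cosh_add_cosh {a b p q : ℝ} (hap : |a| ≤ |p|) (hbp : |b| ≤ |p|)
    (h : a ^ 2 + b ^ 2 < p ^ 2 + q ^ 2) :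
    Real.cosh a + Real.cosh b < Real.cosh p + Real.cosh q := by
  refine hasSum_lt (i := 1) (fun n => ?_) ?_ ((Real.hasSum_cosh a).add (Real.hasSum_cosh b))
    ((Real.hasSum_cosh p).add (Real.hasSum_cosh q))
  · simp only [pow_mul, ← add_div]
    exact div_le_div_of_nonneg_right (pow_add_pow_le_pow_add_pow (sq_nonneg a) (sq_nonneg b)
      (sq_nonneg q) (sq_le_sq.2 hap) (sq_le_sq.2 hbp) h.le n) (Nat.cast_nonneg _)
  · simp only [mul_one, ← add_div]
    gcongr

lemma two_mul_cosh_half_dist_sq (p q : ℍ) :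
    (2 * Real.cosh (dist p q / 2)) ^ 2 * (p.im * q.im) =
      (p.re - q.re) ^ 2 + (p.im + q.im) ^ 2 := by
  have hdouble : (2 * Real.cosh (dist p q / 2)) ^ 2 = 2 + 2 * Real.cosh (dist p q) := by
    have := Real.cosh_two_mul (dist p q / 2)
    rw [mul_div_cancel₀ _ two_ne_zero, Real.sinh_sq] at this
    linarith
  have := p.im_pos
  have := q.im_pos
  rw [hdouble, UpperHalfPlane.cosh_dist']
  field_simp
  ring

/-- The midpoint of the geodesic segment from `p` to `q`. On the hyperboloid it is
`(p + q) / (2 * cosh (dist p q / 2))`, which gives the coordinates used here. -/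
noncomputable def hyperbolicMidpoint (p q : ℍ) : ℍ :=
  ⟨⟨(p.re * q.im + q.re * p.im) / (p.im + q.im),
    2 * Real.cosh (dist p q / 2) * (p.im * q.im) / (p.im + q.im)⟩, by
    have := p.im_pos
    have := q.im_pos
    have := Real.cosh_pos (dist p q / 2)
    positivity⟩

lemma hyperbolicMidpoint_comm (p q : ℍ) : hyperbolicMidpoint p q = hyperbolicMidpoint q p := by
  simp only [hyperbolicMidpoint, dist_comm, add_comm, mul_comm]

lemma two_mul_cosh_half_dist_mul_cosh_dist_hyperbolicMidpoint (p q z : ℍ) :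
    2 * Real.cosh (dist p q / 2) * Real.cosh (dist z (hyperbolicMidpoint p q)) =
      Real.cosh (dist z p) + Real.cosh (dist z q) := by
  have hsq := two_mul_cosh_half_dist_sq p q
  have := p.im_pos
  have := q.im_pos
  have := z.im_pos
  have := Real.cosh_pos (dist p q / 2)
  have hre : (hyperbolicMidpoint p q).re = (p.re * q.im + q.re * p.im) / (p.im + q.im) := rfl
  have him : (hyperbolicMidpoint p q).im =
    2 * Real.cosh (dist p q / 2) * (p.im * q.im) / (p.im + q.im) := rfl
  rw [UpperHalfPlane.cosh_dist' z, UpperHalfPlane.cosh_dist' z, UpperHalfPlane.cosh_dist' z,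
    hre, him]
  field_simp
  linear_combination (p.im * q.im) * hsq

lemma dist_left_hyperbolicMidpoint (p q : ℍ) : dist p (hyperbolicMidpoint p q) = dist p q / 2 := by
  have hmedian := two_mul_cosh_half_dist_mul_cosh_dist_hyperbolicMidpoint p q p
  have hdouble := Real.cosh_two_mul (dist p q / 2)
  rw [mul_div_cancel₀ _ two_ne_zero, Real.sinh_sq] at hdouble
  rw [dist_self, Real.cosh_zero, hdouble] at hmedian
  have hcosh : Real.cosh (dist p (hyperbolicMidpoint p q)) = Real.cosh (dist p q / 2) :=
    mul_left_cancel₀ (mul_pos two_pos (Real.cosh_pos (dist p q / 2))).ne' (by linarith)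
  exact Real.cosh_strictMonoOn.injOn dist_nonneg (div_nonneg dist_nonneg two_pos.le) hcosh

lemma dist_sq_hyperbolicMidpoint_le (p q z : ℍ) : dist z (hyperbolicMidpoint p q) ^ 2 ≤
    dist z p ^ 2 / 2 + dist z q ^ 2 / 2 - dist p q ^ 2 / 4 := by
  set c := hyperbolicMidpoint p q with hc
  have hcp : dist c p = dist p q / 2 := by rw [dist_comm, dist_left_hyperbolicMidpoint]
  have hcq : dist c q = dist p q / 2 := by
    rw [hc, hyperbolicMidpoint_comm, dist_comm, dist_left_hyperbolicMidpoint, dist_comm]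
  by_contra! hlt
  have hstrict : Real.cosh (dist z p) + Real.cosh (dist z q) <
      Real.cosh (dist z c + dist p q / 2) + Real.cosh (dist z c - dist p q / 2) := by
    refine cosh_add_cosh_lt_cosh_add_cosh (abs_le_abs_of_nonneg dist_nonneg ?_)
      (abs_le_abs_of_nonneg dist_nonneg ?_) (by linarith)
    · exact (dist_triangle z c p).trans_eq (by rw [hcp])
    · exact (dist_triangle z c q).trans_eq (by rw [hcq])
  rw [← two_mul_cosh_half_dist_mul_cosh_dist_hyperbolicMidpoint, Real.cosh_add,
    Real.cosh_sub] at hstrict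
  linarith

instance : SemiparallelogramSpace ℍ where
  exists_isComparisonPoint_half p q := by
    refine ⟨hyperbolicMidpoint p q, fun z => ?_⟩
    rw [dist_comm _ z, dist_comm p z, dist_comm q z]
    linarith [dist_sq_hyperbolicMidpoint_le p q z]

end HyperbolicPlane

theorem stmt_16 (C : ℝ) (hC0 : 0 ≤ C) (hC1 : C < 1) (m : ℕ) (hm : 0 < m) :
    ∃ C' : ℝ, C ≤ C' ∧ C' < 1 ∧
      ∀ (X' : Set (EuclideanSpace ℝ (Fin m))) (f : X' → ℍ),
        (∀ x y : X', dist (f x) (f y) ≤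
          C * dist (x : EuclideanSpace ℝ (Fin m)) (y : EuclideanSpace ℝ (Fin m))) →
        ∃ F : EuclideanSpace ℝ (Fin m) → ℍ,
          (∀ x y : EuclideanSpace ℝ (Fin m), dist (F x) (F y) ≤ C' * dist x y) ∧
          ∀ x : X', F x = f x := by
  refine ⟨C, le_rfl, hC1, fun X' f hf => ?_⟩
  lift C to ℝ≥0 using hC0
  obtain ⟨F, hF, hFf⟩ := stmt_16_general (LipschitzWith.of_dist_le_mul hf)
  exact ⟨F, hF.dist_le_mul, hFf⟩
end
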